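/- Let π be a permutation of [n] and let f_π be the unique subexcedant function on [n] with π = (n f_π(n)) ∘ ⋯ ∘ (2 f_π(2)) ∘ (1 f_π(1)), where (i j) denotes the transposition of i and j. Then: (a) if i is a right-to-left minima index of π then π(i) = f_π(i); (b) the right-to-left minima values of π and of f_π coincide: RLMv(π) = RLMv(f_π); and (c) the right-to-left minima indices coincide: RLMi(π) = RLMi(f_π). -/

import Mathlib

open Finset

/-- Number of inversions of a permutation of `Fin n`. -/
def inversions {n : ℕ} (π : Equiv.Perm (Fin n)) : ℕ :=
  (Finset.univ.filter fun p : Fin n × Fin n => p.1 < p.2 ∧ π p.2 < π p.1).card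

/-- Excedance indices of a permutation. -/
def EXCi {n : ℕ} (π : Equiv.Perm (Fin n)) : Finset (Fin n) :=
  Finset.univ.filter fun i => i < π i

/-- Excedance values of a permutation. -/
def EXCv {n : ℕ} (π : Equiv.Perm (Fin n)) : Finset (Fin n) :=
  (EXCi π).image π

/-- The permutation `(n f(n)) ∘ ⋯ ∘ (2 f(2)) ∘ (1 f(1))` associated to a
subexcedant function `f` (the transposition `(1 f(1))` is applied first). -/
def sefPerm {n : ℕ} (f : Fin n → Fin n) : Equiv.Perm (Fin n) :=
  ((List.ofFn fun i : Fin n => Equiv.swap i (f i)).reverse).prod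

/-- Right-to-left minima indices of an arbitrary function `g : Fin n → Fin n`. -/
def RLMiF {n : ℕ} (g : Fin n → Fin n) : Finset (Fin n) :=
  Finset.univ.filter fun i => ∀ j, i < j → g i < g j

/-- Right-to-left minima values of an arbitrary function `g : Fin n → Fin n`. -/
def RLMvF {n : ℕ} (g : Fin n → Fin n) : Finset (Fin n) :=
  (RLMiF g).image g

/-!
Apply the transpositions `(k f(k))` one at a time, in increasing order of `k`, and follow the
image of `i`. It is moved first at time `i`, to `f i ≤ i`, and every later move takes it to the
current time, so it ends at a value above `i` as soon as some `k > i` has `f k = f i`, and stays at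
`f i` otherwise. Hence `π` takes every value of `f` at the last index where `f` does, while at an
index `i` that is not last for its value, `f i ≤ i < π i`. Such an `i` is a right-to-left minimum
neither of `f`, since `f i` recurs to its right, nor of `π`, since `π` takes the value `f i < π i`
there.
-/

section SwapProd

variable {α : Type*} [DecidableEq α]

/-- The product of the transpositions `(k f(k))` for `k` in `l`. The last entry of `l` acts first,
so the partial products of the permutation coded by a subexcedant function are the `swapProd f l`
with `l` strictly decreasing. -/
def swapProd (f : α → α) (l : List α) : Equiv.Perm α :=
  (l.map fun k => Equiv.swap k (f k)).prod

theorem swapProd_cons_apply (f : α → α) (k : α) (l : List α) (i : α) :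
    swapProd f (k :: l) i = Equiv.swap k (f k) (swapProd f l i) := by
  simp only [swapProd, List.map_cons, List.prod_cons, Equiv.Perm.mul_apply]

variable [Preorder α] {f : α → α} {l : List α} {i j : α}

theorem swapProd_apply_of_forall_lt (hf : ∀ k ∈ l, f k ≤ k) (hi : ∀ k ∈ l, k < i) :
    swapProd f l i = i := by
  induction l with
  | nil => rfl
  | cons k l ih =>
    rw [List.forall_mem_cons] at hf hi
    rw [swapProd_cons_apply, ih hf.2 hi.2]
    exact Equiv.swap_apply_of_ne_of_ne hi.1.ne' (hf.1.trans_lt hi.1).ne'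

theorem swapProd_apply_of_forall_ne (hl : l.Pairwise (· > ·)) (hf : ∀ k ∈ l, f k ≤ k)
    (hil : i ∈ l) (hi : ∀ k ∈ l, i < k → f k ≠ f i) : swapProd f l i = f i := by
  induction l with
  | nil => exact absurd hil List.not_mem_nil
  | cons k l ih =>
    rw [List.pairwise_cons] at hl
    rw [List.forall_mem_cons] at hf hi
    rw [swapProd_cons_apply]
    rcases List.mem_cons.1 hil with rfl | hil
    · rw [swapProd_apply_of_forall_lt hf.2 hl.1, Equiv.swap_apply_left]
    · have hik : i < k := hl.1 i hil
      rw [ih hl.2 hf.2 hil hi.2]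
      exact Equiv.swap_apply_of_ne_of_ne ((hf.2 i hil).trans_lt hik).ne (hi.1 hik).symm

theorem lt_swapProd_apply (hl : l.Pairwise (· > ·)) (hf : ∀ k ∈ l, f k ≤ k)
    (hil : i ∈ l) (hjl : j ∈ l) (hij : i < j) (hfij : f j = f i) : i < swapProd f l i := by
  induction l generalizing j with
  | nil => exact absurd hil List.not_mem_nil
  | cons k l ih =>
    rw [List.pairwise_cons] at hl
    rw [List.forall_mem_cons] at hf
    replace hil : i ∈ l := by
      refine (List.mem_cons.1 hil).resolve_left ?_
      rintro rfl
      rcases List.mem_cons.1 hjl with rfl | hjl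
      · exact lt_irrefl _ hij
      · exact lt_asymm hij (hl.1 j hjl)
    have hik : i < k := hl.1 i hil
    rw [swapProd_cons_apply]
    by_cases hfk : swapProd f l i = f k
    · rwa [hfk, Equiv.swap_apply_right]
    have hk : swapProd f l i ≠ k := fun h =>
      hik.ne ((swapProd f l).injective (h.trans (swapProd_apply_of_forall_lt hf.2 hl.1).symm))
    obtain ⟨m, hml, him, hfim⟩ : ∃ m ∈ l, i < m ∧ f m = f i := by
      rcases List.mem_cons.1 hjl with rfl | hjl
      · by_contra! hlast
        exact hfk ((swapProd_apply_of_forall_ne hl.2 hf.2 hil hlast).trans hfij.symm)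
      · exact ⟨j, hjl, hij, hfij⟩
    rw [Equiv.swap_apply_of_ne_of_ne hk hfk]
    exact ih hl.2 hf.2 hil hml him hfim

end SwapProd

section SefPerm

variable {n : ℕ} {f : Fin n → Fin n} {i j : Fin n}

theorem sefPerm_eq_swapProd (f : Fin n → Fin n) :
    sefPerm f = swapProd f (List.finRange n).reverse := by
  rw [sefPerm, swapProd, List.ofFn_eq_map, List.map_reverse]

theorem pairwise_gt_reverse_finRange (n : ℕ) : (List.finRange n).reverse.Pairwise (· > ·) :=
  List.pairwise_reverse.2 (List.pairwise_lt_finRange n)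

theorem sefPerm_apply_of_forall_ne (hf : ∀ k, f k ≤ k) (hi : ∀ k, i < k → f k ≠ f i) :
    sefPerm f i = f i := by
  rw [sefPerm_eq_swapProd]
  exact swapProd_apply_of_forall_ne (pairwise_gt_reverse_finRange n) (fun k _ => hf k)
    (List.mem_reverse.2 (List.mem_finRange i)) fun k _ => hi k

theorem lt_sefPerm_apply (hf : ∀ k, f k ≤ k) (hij : i < j) (hfij : f j = f i) :
    i < sefPerm f i := by
  rw [sefPerm_eq_swapProd]
  exact lt_swapProd_apply (pairwise_gt_reverse_finRange n) (fun k _ => hf k)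
    (List.mem_reverse.2 (List.mem_finRange i)) (List.mem_reverse.2 (List.mem_finRange j)) hij hfij

theorem le_sefPerm_apply (hf : ∀ k, f k ≤ k) (i : Fin n) : f i ≤ sefPerm f i := by
  by_cases hi : ∀ k, i < k → f k ≠ f i
  · exact (sefPerm_apply_of_forall_ne hf hi).ge
  · push Not at hi
    obtain ⟨k, hik, hfik⟩ := hi
    exact (hf i).trans (lt_sefPerm_apply hf hik hfik).le

theorem exists_le_apply_eq_and_sefPerm_apply_eq (hf : ∀ k, f k ≤ k) (i : Fin n) :
    ∃ k, i ≤ k ∧ f k = f i ∧ sefPerm f k = f i := by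
  obtain ⟨k, hik, ⟨hfk, hk⟩⟩ :=
    Set.Finite.exists_le_maximal (Set.toFinite {k | f k = f i}) (a := i) rfl
  have hlast : ∀ m, k < m → f m ≠ f k := fun m hkm hfm =>
    hkm.not_ge (hk (hfm.trans hfk) hkm.le)
  exact ⟨k, hik, hfk, (sefPerm_apply_of_forall_ne hf hlast).trans hfk⟩

theorem mem_RLMiF {g : Fin n → Fin n} : i ∈ RLMiF g ↔ ∀ j, i < j → g i < g j :=
  Finset.mem_filter_univ i

theorem sefPerm_apply_of_mem_RLMiF (hf : ∀ k, f k ≤ k) (hi : i ∈ RLMiF (sefPerm f)) :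
    sefPerm f i = f i := by
  obtain ⟨k, hik, hfk, hk⟩ := exists_le_apply_eq_and_sefPerm_apply_eq hf i
  rcases hik.eq_or_lt with rfl | hik
  · exact hk
  · have hlt : sefPerm f i < i := calc
      sefPerm f i < sefPerm f k := mem_RLMiF.1 hi k hik
      _ = f i := hk
      _ ≤ i := hf i
    exact absurd hlt (lt_sefPerm_apply hf hik hfk).not_gt

theorem RLMiF_sefPerm (hf : ∀ k, f k ≤ k) : RLMiF (sefPerm f) = RLMiF f := by
  ext i
  refine ⟨fun hi => mem_RLMiF.2 fun j hij => ?_, fun hi => mem_RLMiF.2 fun j hij => ?_⟩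
  · obtain ⟨k, hjk, -, hk⟩ := exists_le_apply_eq_and_sefPerm_apply_eq hf j
    calc
      f i = sefPerm f i := (sefPerm_apply_of_mem_RLMiF hf hi).symm
      _ < sefPerm f k := mem_RLMiF.1 hi k (hij.trans_le hjk)
      _ = f j := hk
  · rw [mem_RLMiF] at hi
    calc
      sefPerm f i = f i := sefPerm_apply_of_forall_ne hf fun k hik => (hi k hik).ne'
      _ < f j := hi j hij
      _ ≤ sefPerm f j := le_sefPerm_apply hf j

theorem RLMvF_sefPerm (hf : ∀ k, f k ≤ k) : RLMvF (sefPerm f) = RLMvF f := by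
  rw [RLMvF, RLMvF, ← RLMiF_sefPerm hf]
  exact Finset.image_congr fun _ hi => sefPerm_apply_of_mem_RLMiF hf hi

end SefPerm

theorem stmt14 (n : ℕ) (f : Fin n → Fin n) (hf : ∀ i, f i ≤ i)
    (π : Equiv.Perm (Fin n)) (hπ : π = sefPerm f) :
    (∀ i ∈ RLMiF ⇑π, π i = f i)
    ∧ RLMvF ⇑π = RLMvF f
    ∧ RLMiF ⇑π = RLMiF f := by
  subst hπ
  exact ⟨fun _ => sefPerm_apply_of_mem_RLMiF hf, RLMvF_sefPerm hf, RLMiF_sefPerm hf⟩
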